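/- Let Y be a nonempty finite set, τ > 0, and s, r : Y → ℝ. Let p = softmax_τ(s) and q = softmax_τ(r). Then KL(p ‖ q) ≤ KL(q ‖ p) + (3/(4τ²))·‖s − r‖₂², where ‖s − r‖₂² = Σ_{y∈Y} (s(y) − r(y))². -/

import Mathlib

/-!
Write `d = (s - r) / τ`, `p = softmax τ s`, `q = softmax τ r`. The ratio `p / q` is
`exp d * C`, where the ratio of normalizers `C = Z_r / Z_s` equals `∑ p exp (-d)`, so `KL(p ‖ q) = ∑ p d + log (∑ p exp (-d))`:
the centred cumulant generating function of `-d` under `p`. As `|d| ≤ ‖d‖₂`, Hoeffding's lemma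
(`sum_mul_exp_le`) bounds it by `‖d‖₂² / 2`. Since `KL(q ‖ p) ≥ 0` by Gibbs' inequality
(`klDiv_nonneg`), this gives the bound, even with `1 / 2` in place of `3 / 4`.
-/

open Finset

/-- `softmax τ u` is the probability distribution proportional to `exp (u y / τ)`. -/
noncomputable def softmax {Y : Type*} [Fintype Y] (τ : ℝ) (u : Y → ℝ) (y : Y) : ℝ :=
  Real.exp (u y / τ) / ∑ y', Real.exp (u y' / τ)

/-- KL divergence between two distributions on a finite set. -/
noncomputable def klDiv {Y : Type*} [Fintype Y] (p q : Y → ℝ) : ℝ :=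
  ∑ y, p y * Real.log (p y / q y)

open ProbabilityTheory MeasureTheory in
/-- Hoeffding's lemma for a finitely supported law, the range of `x` being contained in
`[-‖x‖₂, ‖x‖₂]`. -/
lemma sum_mul_exp_le {Y : Type*} [Fintype Y] (p x : Y → ℝ) (hp : ∀ y, 0 < p y)
    (hp1 : ∑ y, p y = 1) :
    ∑ y, p y * Real.exp (x y) ≤ Real.exp (∑ y, p y * x y + (∑ y, x y ^ 2) / 2) := by
  let _ : MeasurableSpace Y := ⊤
  have h1 : ∑ y, ENNReal.ofReal (p y) = 1 := by
    rw [← ENNReal.ofReal_sum_of_nonneg fun y _ => (hp y).le, hp1, ENNReal.ofReal_one]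
  let P : PMF Y := PMF.ofFintype (fun y => ENNReal.ofReal (p y)) h1
  have hint : ∀ f : Y → ℝ, ∫ y, f y ∂P.toMeasure = ∑ y, p y * f y := by
    intro f
    rw [PMF.integral_eq_sum]
    refine Finset.sum_congr rfl fun y _ => ?_
    simp [P, ENNReal.toReal_ofReal (hp y).le]
  set D := ∑ y, x y ^ 2 with hD
  have hD0 : 0 ≤ D := Finset.sum_nonneg fun y _ => sq_nonneg _
  have hmem : ∀ y, x y ∈ Set.Icc (-√D) (√D) := fun y => by
    rw [Set.mem_Icc, ← abs_le]
    exact Real.abs_le_sqrt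
      (Finset.single_le_sum (f := fun y => x y ^ 2) (fun y _ => sq_nonneg _) (Finset.mem_univ y))
  have H := (hasSubgaussianMGF_of_mem_Icc (μ := P.toMeasure) (X := x)
    (measurable_of_finite x).aemeasurable (Filter.Eventually.of_forall hmem)).mgf_le 1
  rw [mgf, hint, hint] at H
  set m := ∑ y, p y * x y with hm
  have e1 : ∑ y, p y * Real.exp (1 * (x y - m)) = (∑ y, p y * Real.exp (x y)) * Real.exp (-m) := by
    rw [Finset.sum_mul]
    refine Finset.sum_congr rfl fun y _ => ?_
    rw [one_mul, sub_eq_add_neg, Real.exp_add, mul_assoc]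
  have e2 : (((‖√D - -√D‖₊ / 2) ^ 2 : NNReal) : ℝ) * 1 ^ 2 / 2 = D / 2 := by
    have : (‖√D - -√D‖ / 2) ^ 2 = D := by
      rw [div_pow, Real.norm_eq_abs, sq_abs]
      nlinarith [Real.sq_sqrt hD0]
    push_cast
    rw [this]; ring
  rw [e1, e2] at H
  calc _ = (∑ y, p y * Real.exp (x y)) * Real.exp (-m) * Real.exp m := by
        rw [mul_assoc, ← Real.exp_add]; simp
    _ ≤ Real.exp (D / 2) * Real.exp m := by gcongr
    _ = _ := by rw [← Real.exp_add, add_comm]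

/-- Gibbs' inequality. -/
lemma klDiv_nonneg {Y : Type*} [Fintype Y] (p q : Y → ℝ) (hp : ∀ y, 0 < p y)
    (hq : ∀ y, 0 < q y) (h : ∑ y, p y = ∑ y, q y) : 0 ≤ klDiv p q := by
  have key : ∑ y, (p y - q y) ≤ klDiv p q := by
    refine Finset.sum_le_sum fun y _ => ?_
    have h1 := Real.one_sub_inv_le_log_of_pos (div_pos (hp y) (hq y))
    calc p y - q y = p y * (1 - (p y / q y)⁻¹) := by
          have := (hp y).ne'
          have := (hq y).ne'
          field_simp
      _ ≤ _ := mul_le_mul_of_nonneg_left h1 (hp y).le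
  rwa [Finset.sum_sub_distrib, h, sub_self] at key

lemma sum_exp_pos {Y : Type*} [Fintype Y] [Nonempty Y] (τ : ℝ) (u : Y → ℝ) :
    0 < ∑ y, Real.exp (u y / τ) :=
  Finset.sum_pos (fun _ _ => Real.exp_pos _) Finset.univ_nonempty

lemma softmax_pos {Y : Type*} [Fintype Y] [Nonempty Y] (τ : ℝ) (u : Y → ℝ) (y : Y) :
    0 < softmax τ u y :=
  div_pos (Real.exp_pos _) (sum_exp_pos τ u)

lemma sum_softmax {Y : Type*} [Fintype Y] [Nonempty Y] (τ : ℝ) (u : Y → ℝ) :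
    ∑ y, softmax τ u y = 1 := by
  simp only [softmax]
  rw [← Finset.sum_div, div_self (sum_exp_pos τ u).ne']

theorem kl_reversal_bound {Y : Type*} [Fintype Y] [Nonempty Y]
    (τ : ℝ) (hτ : 0 < τ) (s r : Y → ℝ) :
    klDiv (softmax τ s) (softmax τ r)
      ≤ klDiv (softmax τ r) (softmax τ s)
        + (3 / (4 * τ ^ 2)) * ∑ y, (s y - r y) ^ 2 := by
  have h0 : 0 ≤ klDiv (softmax τ r) (softmax τ s) :=
    klDiv_nonneg _ _ (softmax_pos τ r) (softmax_pos τ s) (by simp only [sum_softmax])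
  have hs := sum_exp_pos τ s
  have hr := sum_exp_pos τ r
  set C := (∑ y, Real.exp (r y / τ)) / ∑ y, Real.exp (s y / τ) with hC
  have hC0 : 0 < C := div_pos hr hs
  have hlog : ∀ y, Real.log (softmax τ s y / softmax τ r y)
      = -(r y / τ - s y / τ) + Real.log C := by
    intro y
    have : softmax τ s y / softmax τ r y = Real.exp (-(r y / τ - s y / τ)) * C := by
      rw [neg_sub, Real.exp_sub, hC, softmax, softmax]
      field_simp
    rw [this, Real.log_mul (Real.exp_pos _).ne' hC0.ne', Real.log_exp]
  have hsum : ∑ y, softmax τ s y * Real.exp (r y / τ - s y / τ) = C := by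
    rw [hC, Finset.sum_div]
    refine Finset.sum_congr rfl fun y _ => ?_
    rw [softmax, Real.exp_sub]
    field_simp
  have hkl : klDiv (softmax τ s) (softmax τ r)
      = -(∑ y, softmax τ s y * (r y / τ - s y / τ)) + Real.log C := by
    simp only [klDiv, hlog, mul_add, mul_neg]
    rw [Finset.sum_add_distrib, ← Finset.sum_mul, sum_softmax, one_mul, Finset.sum_neg_distrib]
  have H := sum_mul_exp_le (softmax τ s) (fun y => r y / τ - s y / τ) (softmax_pos τ s)
    (sum_softmax τ s)
  rw [hsum, ← Real.log_le_iff_le_exp hC0] at H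
  have hD : ∑ y, (r y / τ - s y / τ) ^ 2 = (1 / τ ^ 2) * ∑ y, (s y - r y) ^ 2 := by
    rw [Finset.mul_sum]
    refine Finset.sum_congr rfl fun y _ => ?_
    field_simp
    ring
  have hD0 : 0 ≤ (1 / τ ^ 2) * ∑ y, (s y - r y) ^ 2 := by positivity
  have h34 : (3 / (4 * τ ^ 2)) * ∑ y, (s y - r y) ^ 2
      = 3 / 4 * ((1 / τ ^ 2) * ∑ y, (s y - r y) ^ 2) := by
    field_simp
  rw [hD] at H
  rw [hkl, h34]
  linarith
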